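/- Let q be a prime power, let n be a positive divisor of q²−1, set n₂ = n/gcd(n, q+1), let t be an integer with 1 ≤ t ≤ (q−1)/n₂ − 1, set N = (t+1)n + 1, and let k be an integer with 1 ≤ k ≤ ⌊(N+q−1)/(q+1)⌋. (a) There exists an MDS Hermitian self-orthogonal [N, k]_{q²} code, whose Hermitian dual has minimum distance k+1. (b) If k(q+1) = N−1, there exists an MDS Hermitian self-orthogonal [N+1, k+1]_{q²} code, whose Hermitian dual has minimum distance k+2. (c) If N−1+q ≠ k(q+1) ≠ N−1, there exist n' ∈ {N, N+1} and an MDS Hermitian self-orthogonal [n', k+1]_{q²} code, whose Hermitian dual has minimum distance k+2. -/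

import Mathlib

/-!
The codes are (extended) generalized Reed–Solomon codes. Choose a set `S` of `t + 1` nonzero elements
of the subfield `𝔽_q` that are `n`-th powers in `𝔽_{q²}` (there are `(q - 1) / n₂` of them,
`exists_power_set`), and evaluate at the `N` points of `A = {0} ∪ {x | x ^ n ∈ S}`. The Lagrange
weights `u x = ∏ y ≠ x, (x - y)⁻¹` of `A` lie in `𝔽_q` (`exists_points`), so they are norms
`v ^ (q + 1)`, and `∑ x, u x * x ^ e` is `0` for `e ≤ N - 2` and `1` for `e = N - 1`
(`sum_nodalWeight_mul_pow`). The Hermitian product of the words of `X ^ i` and `X ^ j` in the code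
with multipliers `v` is exactly this power sum at `e = i + q * j`.

* If `(K - 1) * (q + 1) ≤ N - 2`, all products vanish and the `K`-dimensional code is self-orthogonal.
  This gives (a), and (c) when `k * (q + 1) < N - 1`.
* If `k * (q + 1) = N - 1`, the only nonzero product for dimension `k + 1` is that of `X ^ k` with
  itself; it is cancelled by a coordinate at infinity (`exists_extended_grs`), giving (b).
* If `N - 1 < k * (q + 1) < N - 1 + q`, the exponents `i + q * j` with `i ≤ k`, `j < k` are at most
  `N - 2`; raising to the power `q` swaps `i` and `j`, so again only the product of `X ^ k` with
  itself, which lies in `𝔽_q`, may survive. The length is `N` or `N + 1` according to whether it is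
  zero.

That the Hermitian duals have the stated distance is the general fact that the dual of an MDS code
is MDS (`mds_dual_minDist`).
-/

open scoped BigOperators

/-- A linear code `C ⊆ 𝔽_{q²}ⁿ` is Hermitian self-orthogonal if
`⟨c,c'⟩_H = ∑ i, c i * (c' i)^q = 0` for all codewords `c, c'`. -/
def IsHermSelfOrth (q : ℕ) {F : Type*} [Field F] {n : ℕ}
    (C : Submodule F (Fin n → F)) : Prop :=
  ∀ c ∈ C, ∀ c' ∈ C, ∑ i, c i * (c' i) ^ q = 0

/-- The minimum Hamming distance of the code `C` equals `d`. -/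
def MinDistEq {F : Type*} [Field F] {n : ℕ}
    (C : Submodule F (Fin n → F)) (d : ℕ) : Prop :=
  (∀ c ∈ C, c ≠ 0 → d ≤ Set.ncard {i | c i ≠ 0}) ∧
  (∃ c ∈ C, c ≠ 0 ∧ Set.ncard {i | c i ≠ 0} = d)

/-- The Hermitian dual `C^{⊥_H} = {x : ⟨x,c⟩_H = 0 for all c ∈ C}` of a code. -/
def hermDual (q : ℕ) {F : Type*} [Field F] {n : ℕ}
    (C : Submodule F (Fin n → F)) : Submodule F (Fin n → F) where
  carrier := {x | ∀ c ∈ C, ∑ i, x i * (c i) ^ q = 0}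
  add_mem' := by
    intro a b ha hb c hc
    have h1 := ha c hc
    have h2 := hb c hc
    calc ∑ i, (a + b) i * c i ^ q
        = ∑ i, (a i * c i ^ q + b i * c i ^ q) := by
          simp [add_mul]
      _ = 0 := by rw [Finset.sum_add_distrib, h1, h2, add_zero]
  zero_mem' := by intro c hc; simp
  smul_mem' := by
    intro r x hx c hc
    have h := hx c hc
    calc ∑ i, (r • x) i * c i ^ q = r * ∑ i, x i * c i ^ q := by
          simp [Finset.mul_sum, mul_assoc]
      _ = 0 := by rw [h, mul_zero]

open Polynomial

/-! ### MDS codes and their Hermitian duals -/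

section MDS

variable {F : Type*} [Field F]

lemma ncard_ne_zero_add {n : ℕ} (c : Fin n → F) :
    Set.ncard {i | c i ≠ 0} + Set.ncard {i | c i = 0} = n := by
  have h := Set.ncard_add_ncard_compl {i | c i ≠ 0}
  have h2 : ({i | c i ≠ 0}ᶜ : Set (Fin n)) = {i | c i = 0} := by ext; simp
  rw [h2] at h
  simpa using h

lemma card_le_ncard_zeros {n m : ℕ} (c : Fin n → F) (g : Fin m → Fin n)
    (hg : Function.Injective g) (h : ∀ j, c (g j) = 0) : m ≤ Set.ncard {i | c i = 0} := by
  have h1 : Set.ncard (Set.range g) = m := by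
    rw [← Set.image_univ, Set.ncard_image_of_injective _ hg]; simp
  rw [← h1]
  apply Set.ncard_le_ncard _ (Set.toFinite _)
  rintro _ ⟨j, rfl⟩
  exact h j

/-- A `K`-dimensional code in which nonzero words have fewer than `K` zeros contains, by counting
dimensions, a nonzero word vanishing on the first `K - 1` coordinates, so the Singleton bound is
attained. -/
lemma mds_minDist {n K : ℕ} (C : Submodule F (Fin n → F))
    (hK : Module.finrank F C = K) (hK1 : 1 ≤ K) (hKn : K + 1 ≤ n)
    (hz : ∀ c ∈ C, c ≠ 0 → Set.ncard {i | c i = 0} < K) :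
    MinDistEq C (n - K + 1) := by
  refine ⟨fun c hc h0 => ?_, ?_⟩
  · have := hz c hc h0
    have := ncard_ne_zero_add c
    omega
  · let g : Fin (K - 1) → Fin n := Fin.castLE (by omega)
    let L : C →ₗ[F] (Fin (K - 1) → F) := (LinearMap.funLeft F F g) ∘ₗ C.subtype
    have hL : LinearMap.ker L ≠ ⊥ := by
      apply LinearMap.ker_ne_bot_of_finrank_lt
      rw [hK]; simp; omega
    obtain ⟨c, hc, hc0⟩ := (Submodule.ne_bot_iff _).1 hL
    have hc0' : (c : Fin n → F) ≠ 0 := by simpa using hc0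
    refine ⟨c, c.2, hc0', ?_⟩
    have h1 := hz c c.2 hc0'
    have h2 := card_le_ncard_zeros (c : Fin n → F) g (Fin.castLE_injective _)
      (fun j => congrFun (LinearMap.mem_ker.1 hc) j)
    have h3 := ncard_ne_zero_add (c : Fin n → F)
    omega

/-- The Hermitian dual of an MDS code is MDS. Since `C` projects bijectively onto any `K`
coordinates, a nonzero dual word cannot be supported on `K` positions; a dual word supported on
`K + 1` positions exists by counting dimensions. -/
lemma mds_dual_minDist {q n K : ℕ} (hq : 0 < q) (σ : F →+* F) (hσ : ∀ x, σ x = x ^ q)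
    (C : Submodule F (Fin n → F))
    (hK : Module.finrank F C = K) (hKn : K + 1 ≤ n)
    (hz : ∀ c ∈ C, c ≠ 0 → Set.ncard {i | c i = 0} < K) :
    MinDistEq (hermDual q C) (K + 1) := by
  classical
  have lower : ∀ x ∈ hermDual q C, x ≠ 0 → K + 1 ≤ Set.ncard {i | x i ≠ 0} := by
    intro x hx hx0
    by_contra hlt
    rw [Set.ncard_eq_toFinset_card'] at hlt
    obtain ⟨T, hT, hTc⟩ : ∃ T : Finset (Fin n), {i | x i ≠ 0}.toFinset ⊆ T ∧ T.card = K :=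
      Finset.exists_superset_card_eq (by omega) (by simp; omega)
    let L : C →ₗ[F] (T → F) := (LinearMap.funLeft F F (fun i : T => (i : Fin n))) ∘ₗ C.subtype
    have hinj : Function.Injective L := by
      rw [← LinearMap.ker_eq_bot, LinearMap.ker_eq_bot']
      intro c hc
      by_contra hc0
      have h1 := hz c c.2 (by simpa using hc0)
      have h2 : K ≤ Set.ncard {i | (c : Fin n → F) i = 0} := by
        rw [← hTc, ← Set.ncard_coe_finset]
        apply Set.ncard_le_ncard _ (Set.toFinite _)
        intro i hi
        exact congrFun hc ⟨i, hi⟩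
      omega
    have hsurj := (LinearMap.injective_iff_surjective_of_finrank_eq_finrank
      (f := L) (by rw [hK]; simp [hTc])).1 hinj
    obtain ⟨i0, hi0⟩ := Function.ne_iff.1 hx0
    have hi0T : i0 ∈ T := hT (by simpa using hi0)
    obtain ⟨c, hc⟩ := hsurj (Pi.single ⟨i0, hi0T⟩ 1)
    have hsum := hx c c.2
    rw [Finset.sum_eq_single i0] at hsum
    · have : (c : Fin n → F) i0 = 1 := by
        have := congrFun hc ⟨i0, hi0T⟩
        rw [Pi.single_eq_same] at this
        exact this
      rw [this] at hsum
      simp at hsum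
      exact hi0 hsum
    · intro i _ hne
      by_cases hi : x i = 0
      · simp [hi]
      · have hiT : i ∈ T := hT (by simpa using hi)
        have : (c : Fin n → F) i = 0 := by
          have := congrFun hc ⟨i, hiT⟩
          rw [Pi.single_eq_of_ne (by simpa using hne)] at this
          exact this
        simp [this, hq.ne']
    · simp
  refine ⟨lower, ?_⟩
  -- `K` equations for orthogonality to a basis and `n - K - 1` for the vanishing of the first
  -- coordinates leave a nonzero solution in dimension `n`
  let b := Module.finBasisOfFinrankEq F C hK
  let g : Fin (n - K - 1) → Fin n := Fin.castLE (by omega)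
  let L₁ : (Fin n → F) →ₗ[F] (Fin K → F) :=
    { toFun := fun x j => ∑ i, x i * ((b j : C) : Fin n → F) i ^ q
      map_add' := by intro x y; ext j; simp [add_mul, Finset.sum_add_distrib]
      map_smul' := by intro r x; ext j; simp [Finset.mul_sum, mul_assoc] }
  let L := L₁.prod (LinearMap.funLeft F F g)
  have hL : LinearMap.ker L ≠ ⊥ := by
    apply LinearMap.ker_ne_bot_of_finrank_lt
    simp; omega
  obtain ⟨x, hx, hx0⟩ := (Submodule.ne_bot_iff _).1 hL
  have hx' := LinearMap.mem_ker.1 hx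
  have hx1 : L₁ x = 0 := congrArg Prod.fst hx'
  have hx2 : LinearMap.funLeft F F g x = 0 := congrArg Prod.snd hx'
  have hxd : x ∈ hermDual q C := by
    intro c hc
    -- the q-semilinear form is determined by its values on the basis `b`
    have hrep := b.sum_repr ⟨c, hc⟩
    have hci : ∀ i, c i = ∑ j, b.repr ⟨c, hc⟩ j * ((b j : C) : Fin n → F) i := by
      intro i
      have := congrArg (fun z : C => (z : Fin n → F) i) hrep
      simp only [Submodule.coe_sum, Finset.sum_apply, Submodule.coe_smul, Pi.smul_apply,
        smul_eq_mul] at this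
      exact this.symm
    have : ∀ i, x i * c i ^ q =
        ∑ j, (b.repr ⟨c, hc⟩ j) ^ q * (x i * ((b j : C) : Fin n → F) i ^ q) := by
      intro i
      rw [← hσ, hci i, map_sum, Finset.mul_sum]
      refine Finset.sum_congr rfl fun j _ => ?_
      rw [map_mul, hσ, hσ]; ring
    simp_rw [this]
    rw [Finset.sum_comm]
    refine Finset.sum_eq_zero fun j _ => ?_
    rw [← Finset.mul_sum]
    have := congrFun hx1 j
    have h' : ∑ i, x i * ((b j : C) : Fin n → F) i ^ q = 0 := this
    rw [h', mul_zero]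
  refine ⟨x, hxd, hx0, ?_⟩
  have h1 := lower x hxd hx0
  have h2 := card_le_ncard_zeros x g (Fin.castLE_injective _) (fun j => congrFun hx2 j)
  have h3 := ncard_ne_zero_add x
  omega

/-- The image under `φ` of the polynomials of degree less than `K` is a code with all required
properties, as soon as `φ` sends nonzero such polynomials to words with fewer than `K` zeros and
the images of the monomials are pairwise Hermitian orthogonal. -/
lemma exists_code {q n K : ℕ} (hq : 0 < q) (σ : F →+* F) (hσ : ∀ x, σ x = x ^ q)
    (φ : F[X] →ₗ[F] (Fin n → F)) (hK1 : 1 ≤ K) (hKn : K + 1 ≤ n)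
    (hz : ∀ f : F[X], f ≠ 0 → f.natDegree < K → Set.ncard {i | φ f i = 0} < K)
    (ho : ∀ i < K, ∀ j < K, ∑ l, φ (X ^ i) l * (φ (X ^ j) l) ^ q = 0) :
    ∃ C : Submodule F (Fin n → F),
      Module.finrank F C = K ∧ IsHermSelfOrth q C ∧
      MinDistEq C (n - K + 1) ∧ MinDistEq (hermDual q C) (K + 1) := by
  classical
  have hmem : ∀ f ∈ degreeLT F K, f ≠ 0 → f.natDegree < K := by
    intro f hf h0
    rw [mem_degreeLT] at hf
    exact (natDegree_lt_iff_degree_lt h0).2 hf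
  have hz' : ∀ c ∈ (degreeLT F K).map φ, c ≠ 0 → Set.ncard {i | c i = 0} < K := by
    rintro _ ⟨f, hf, rfl⟩ hc
    have hf0 : f ≠ 0 := by rintro rfl; simp at hc
    exact hz f hf0 (hmem f hf hf0)
  have hdim : Module.finrank F ((degreeLT F K).map φ) = K := by
    have hinj : Function.Injective (φ ∘ₗ (degreeLT F K).subtype) := by
      rw [← LinearMap.ker_eq_bot, LinearMap.ker_eq_bot']
      rintro ⟨f, hf⟩ h
      by_contra h0
      have hf0 : f ≠ 0 := by simpa using h0
      have h1 := hz f hf0 (hmem f hf hf0)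
      have h2 : φ f = 0 := h
      rw [h2] at h1
      simp at h1
      omega
    have := LinearMap.finrank_range_of_inj hinj
    rw [LinearMap.range_comp, Submodule.range_subtype, (degreeLTEquiv F K).finrank_eq] at this
    simpa using this
  refine ⟨(degreeLT F K).map φ, hdim, ?_, mds_minDist _ hdim hK1 hKn hz',
    mds_dual_minDist hq σ hσ _ hdim hKn hz'⟩
  rintro _ ⟨f, hf, rfl⟩ _ ⟨g, hg, rfl⟩
  rw [SetLike.mem_coe, degreeLT_eq_span_X_pow] at hf hg
  induction hf using Submodule.span_induction with
  | mem f hf =>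
    simp only [Finset.coe_image, Finset.coe_range, Set.mem_image, Set.mem_Iio] at hf
    obtain ⟨i, hi, rfl⟩ := hf
    induction hg using Submodule.span_induction with
    | mem g hg =>
      simp only [Finset.coe_image, Finset.coe_range, Set.mem_image, Set.mem_Iio] at hg
      obtain ⟨j, hj, rfl⟩ := hg
      exact ho i hi j hj
    | zero => simp [hq.ne']
    | add x y _ _ hx hy =>
      simp only [← hσ] at hx hy ⊢
      simp [mul_add, Finset.sum_add_distrib, hx, hy]
    | smul a x _ hx =>
      simp only [← hσ] at hx ⊢
      simp only [map_smul, Pi.smul_apply, smul_eq_mul, map_mul, mul_left_comm _ (σ a)]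
      rw [← Finset.mul_sum, hx, mul_zero]
  | zero => simp
  | add x y _ _ hx hy => simp [add_mul, Finset.sum_add_distrib, hx, hy]
  | smul a x _ hx =>
    simp only [map_smul, Pi.smul_apply, smul_eq_mul, mul_assoc]
    rw [← Finset.mul_sum, hx, mul_zero]

end MDS

/-! ### Generalized Reed–Solomon codes and their extensions -/

section GRS

variable {F : Type*} [Field F]

lemma ncard_zeros_le {N : ℕ} (a : Fin N → F) (ha : Function.Injective a) (f : F[X])
    (hf : f ≠ 0) : Set.ncard {l | f.eval (a l) = 0} ≤ f.natDegree := by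
  classical
  rw [← Set.ncard_image_of_injective _ ha]
  refine le_trans ?_ ((Multiset.toFinset_card_le f.roots).trans f.card_roots')
  rw [← Set.ncard_coe_finset]
  apply Set.ncard_le_ncard _ (Set.toFinite _)
  rintro _ ⟨l, hl, rfl⟩
  simpa [hf] using hl

/-- The generalized Reed–Solomon code `{(v l * f (a l))_l : deg f < K}` with `v l ^ (q + 1) = u l`
is Hermitian self-orthogonal when the power sums of the nodes `a` weighted by `u` vanish at all
exponents `i + q * j` with `i, j < K`. -/
lemma exists_grs {q N K : ℕ} (hq : 0 < q) (σ : F →+* F) (hσ : ∀ x, σ x = x ^ q)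
    (hnorm : ∀ s : F, s ^ q = s → ∃ v, v ^ (q + 1) = s)
    (a u : Fin N → F) (ha : Function.Injective a) (hu0 : ∀ l, u l ≠ 0) (hu : ∀ l, u l ^ q = u l)
    (hK1 : 1 ≤ K) (hKN : K + 1 ≤ N)
    (hS : ∀ i < K, ∀ j < K, ∑ l, u l * a l ^ (i + q * j) = 0) :
    ∃ C : Submodule F (Fin N → F),
      Module.finrank F C = K ∧ IsHermSelfOrth q C ∧
      MinDistEq C (N - K + 1) ∧ MinDistEq (hermDual q C) (K + 1) := by
  choose v hv using fun l => hnorm (u l) (hu l)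
  have hv0 : ∀ l, v l ≠ 0 := by
    intro l h
    apply hu0 l
    rw [← hv l, h]
    simp
  let φ : F[X] →ₗ[F] (Fin N → F) := LinearMap.pi fun l => v l • leval (a l)
  have hφ : ∀ f l, φ f l = v l * f.eval (a l) := fun f l => rfl
  refine exists_code hq σ hσ φ hK1 hKN ?_ ?_
  · intro f hf0 hf
    refine lt_of_le_of_lt ?_ hf
    simpa [hφ, hv0] using ncard_zeros_le a ha f hf0
  · intro i hi j hj
    rw [← hS i hi j hj]
    refine Finset.sum_congr rfl fun l _ => ?_
    rw [hφ, hφ, ← hv l]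
    simp only [eval_pow, eval_X]
    ring

/-- Extended generalized Reed–Solomon code for polynomials of degree at most `K`: if the weighted
power sum at the top exponent `K + q * K` is the only nonvanishing one, it is cancelled by an extra
coordinate `w * f.coeff K` (evaluation at infinity), placed at index `0`, where `w ^ (q + 1)` is
minus that sum. -/
lemma exists_extended_grs {q N K : ℕ} (hq : 0 < q) (σ : F →+* F) (hσ : ∀ x, σ x = x ^ q)
    (hnorm : ∀ s : F, s ^ q = s → ∃ v, v ^ (q + 1) = s)
    (a u : Fin N → F) (ha : Function.Injective a) (hu0 : ∀ l, u l ≠ 0) (hu : ∀ l, u l ^ q = u l)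
    (hKN : K + 1 ≤ N)
    (hS : ∀ i ≤ K, ∀ j ≤ K, ¬ (i = K ∧ j = K) → ∑ l, u l * a l ^ (i + q * j) = 0)
    (hS0 : ∑ l, u l * a l ^ (K + q * K) ≠ 0)
    (hS1 : (∑ l, u l * a l ^ (K + q * K)) ^ q = ∑ l, u l * a l ^ (K + q * K)) :
    ∃ C : Submodule F (Fin (N + 1) → F),
      Module.finrank F C = K + 1 ∧ IsHermSelfOrth q C ∧
      MinDistEq C ((N + 1) - (K + 1) + 1) ∧ MinDistEq (hermDual q C) (K + 2) := by
  choose v hv using fun l => hnorm (u l) (hu l)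
  have hv0 : ∀ l, v l ≠ 0 := by
    intro l h
    apply hu0 l
    rw [← hv l, h]
    simp
  obtain ⟨w, hw⟩ := hnorm (-∑ l, u l * a l ^ (K + q * K)) (by
    rw [← hσ, map_neg, hσ, hS1])
  have hw0 : w ≠ 0 := by
    rintro rfl
    apply hS0
    simpa using hw.symm
  let φ : F[X] →ₗ[F] (Fin (N + 1) → F) :=
    LinearMap.pi (Fin.cons (w • lcoeff F K) fun l => v l • leval (a l))
  have hφ0 : ∀ f, φ f 0 = w * f.coeff K := fun f => rfl
  have hφ : ∀ f l, φ f (Fin.succ l) = v l * f.eval (a l) := fun f l => rfl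
  refine exists_code hq σ hσ φ (by omega) (by omega) ?_ ?_
  · intro f hf0 hf
    have hZ := ncard_zeros_le a ha f hf0
    have hsucc : Set.ncard (Fin.succ '' {l | f.eval (a l) = 0}) ≤ f.natDegree := by
      rwa [Set.ncard_image_of_injective _ (Fin.succ_injective _)]
    -- a zero at infinity costs one degree, hence one finite zero
    by_cases hc : f.coeff K = 0
    · have hdeg : f.natDegree < K := by
        rcases Nat.lt_or_ge f.natDegree K with h | h
        · exact h
        · exfalso
          have : f.natDegree = K := by omega
          rw [← this] at hc
          exact hf0 (leadingCoeff_eq_zero.1 hc)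
      have h1 : Set.ncard {i | φ f i = 0} ≤
          Set.ncard (insert 0 (Fin.succ '' {l | f.eval (a l) = 0})) := by
        apply Set.ncard_le_ncard _ (Set.toFinite _)
        intro i hi
        induction i using Fin.cases with
        | zero => simp
        | succ l =>
          right
          simpa [hφ, hv0] using hi
      have h2 := Set.ncard_insert_le 0 (Fin.succ '' {l | f.eval (a l) = 0})
      omega
    · have h1 : Set.ncard {i | φ f i = 0} ≤
          Set.ncard (Fin.succ '' {l | f.eval (a l) = 0}) := by
        apply Set.ncard_le_ncard _ (Set.toFinite _)
        intro i hi
        induction i using Fin.cases with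
        | zero => simp [hφ0, hw0, hc] at hi
        | succ l => simpa [hφ, hv0] using hi
      omega
  · intro i hi j hj
    have hsum : ∑ l, φ (X ^ i) (Fin.succ l) * φ (X ^ j) (Fin.succ l) ^ q =
        ∑ l, u l * a l ^ (i + q * j) := by
      refine Finset.sum_congr rfl fun l _ => ?_
      rw [hφ, hφ, ← hv l]
      simp only [eval_pow, eval_X]
      ring
    rw [Fin.sum_univ_succ, hsum, hφ0, hφ0]
    by_cases hij : i = K ∧ j = K
    · obtain ⟨rfl, rfl⟩ := hij
      simp only [coeff_X_pow_self, mul_one]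
      rw [← pow_succ', hw]
      ring
    · rw [hS i (by omega) j (by omega) hij]
      simp only [coeff_X_pow]
      split_ifs with h1 h2
      · exact absurd ⟨h1.symm, h2.symm⟩ hij
      all_goals simp [hq.ne']

/-- Both cases express that the sum is the coefficient of `X ^ (#A - 1)` in the Lagrange
interpolation of `X ^ e` on `A`. -/
lemma sum_nodalWeight_mul_pow [DecidableEq F] (A : Finset F) {e : ℕ} (he : e < A.card) :
    ∑ x ∈ A, Lagrange.nodalWeight A id x * x ^ e = if e + 1 = A.card then 1 else 0 := by
  have h := Lagrange.coeff_eq_sum (s := A) (v := id) (Set.injOn_id _) (P := (X ^ e : F[X]))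
    (by rw [degree_X_pow]; exact_mod_cast he)
  have h2 : ∑ x ∈ A, Lagrange.nodalWeight A id x * x ^ e = (X ^ e : F[X]).coeff (A.card - 1) := by
    rw [h]
    refine Finset.sum_congr rfl fun x _ => ?_
    simp only [Lagrange.nodalWeight, Finset.prod_inv_distrib, eval_pow, eval_X, id]
    rw [div_eq_mul_inv, mul_comm]
  rw [h2, coeff_X_pow]
  congr 1
  exact propext ⟨fun _ => by omega, fun _ => by omega⟩

/-- The set `A = {0} ∪ {x | x ^ n ∈ S}` has nodal weights fixed by `x ↦ x ^ q`: with
`Q = ∏ s ∈ S, (X - s)`, its nodal polynomial is `X * Q(X ^ n)`, whose derivative at `x` is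
`Q(x ^ n) + n x ^ n Q'(x ^ n)`, and both `Q` and `x ^ n ∈ S ∪ {0}` are fixed. -/
lemma exists_points [DecidableEq F] {q n : ℕ} (hn : 0 < n) (σ : F →+* F)
    (hσ : ∀ x, σ x = x ^ q) {ζ : F} (hζ : IsPrimitiveRoot ζ n) (S : Finset F)
    (hS0 : ∀ s ∈ S, s ≠ 0) (hSq : ∀ s ∈ S, s ^ q = s) (hSn : ∀ s ∈ S, ∃ b, b ^ n = s) :
    ∃ A : Finset F, A.card = S.card * n + 1 ∧
      ∀ x ∈ A, Lagrange.nodalWeight A id x ^ q = Lagrange.nodalWeight A id x := by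
  let B := S.biUnion fun s => (nthRoots n s).toFinset
  have hB : ∀ x, x ∈ B ↔ x ^ n ∈ S := by
    intro x
    simp [B, mem_nthRoots hn]
  have h0B : (0 : F) ∉ B := by
    rw [hB, zero_pow hn.ne']
    exact fun h => hS0 0 h rfl
  have hBc : B.card = S.card * n := by
    rw [Finset.card_biUnion]
    · rw [Finset.sum_congr rfl (g := fun _ => n), Finset.sum_const, smul_eq_mul]
      intro s hs
      rw [Multiset.toFinset_card_of_nodup (hζ.nthRoots_nodup (hS0 s hs)), hζ.card_nthRoots,
        if_pos (hSn s hs)]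
    · intro s _ s' _ hne
      rw [Function.onFun, Finset.disjoint_left]
      intro x hx hx'
      simp only [Multiset.mem_toFinset, mem_nthRoots hn] at hx hx'
      exact hne (hx.symm.trans hx')
  have hAc : (insert 0 B).card = S.card * n + 1 := by rw [Finset.card_insert_of_notMem h0B, hBc]
  refine ⟨insert 0 B, hAc, ?_⟩
  intro x hx
  let Q : F[X] := ∏ s ∈ S, (X - C s)
  have hQm : Q.Monic := monic_prod_X_sub_C _ _
  have hQd : Q.natDegree = S.card := by simp [Q]
  have hnodal : Lagrange.nodal (insert 0 B) id = X * expand F n Q := by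
    have hm : (X * expand F n Q).Monic := monic_X.mul (hQm.expand hn)
    have hd : (X * expand F n Q).natDegree = S.card * n + 1 := by
      rw [monic_X.natDegree_mul (hQm.expand hn), natDegree_X, natDegree_expand, hQd, add_comm]
    refine eq_of_degree_le_of_eval_index_eq (insert 0 B) (v := id) (Set.injOn_id _) ?_ ?_ ?_ ?_
    · rw [Lagrange.degree_nodal]
    · rw [Lagrange.degree_nodal, degree_eq_natDegree hm.ne_zero, hd, hAc]
    · rw [hm.leadingCoeff, Lagrange.nodal_monic.leadingCoeff]
    · intro y hy
      rw [Lagrange.eval_nodal_at_node hy]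
      rcases Finset.mem_insert.1 hy with rfl | hy
      · simp
      · rw [hB] at hy
        simp only [id, eval_mul, eval_X, expand_eval, Q, eval_prod]
        rw [Finset.prod_eq_zero hy (by simp), mul_zero]
  have hQσ : Q.map σ = Q := by
    simp only [Q, Polynomial.map_prod, Polynomial.map_sub, map_X, map_C]
    refine Finset.prod_congr rfl fun s hs => ?_
    rw [hσ, hSq s hs]
  have heval : ∀ R : F[X], R.map σ = R → ∀ y, σ y = y → σ (R.eval y) = R.eval y := by
    intro R hR y hy
    conv_rhs => rw [← hR, ← hy, eval_map_apply]
  have hxn : σ (x ^ n) = x ^ n := by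
    rcases Finset.mem_insert.1 hx with rfl | hx
    · simp [hn.ne']
    · rw [hσ, hSq _ ((hB x).1 hx)]
  rw [Lagrange.nodalWeight_eq_eval_derivative_nodal hx, ← hσ, map_inv₀, hnodal]
  congr 1
  have hder : eval (id x) (derivative (X * expand F n Q)) =
      Q.eval (x ^ n) + Q.derivative.eval (x ^ n) * (n * x ^ n) := by
    rw [derivative_mul, derivative_expand]
    simp only [derivative_X, one_mul, eval_add, eval_mul, expand_eval, eval_X, id, eval_pow,
      eval_natCast]
    rw [← mul_pow_sub_one hn.ne' x]
    ring
  rw [hder, map_add, map_mul, map_mul, heval Q hQσ _ hxn,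
    heval _ (by rw [← derivative_map, hQσ]) _ hxn, hxn, map_natCast]

end GRS

/-! ### Norms and `n`-th powers in the field with `q²` elements -/

section FiniteField

variable {F : Type*} [Field F] [Fintype F]

/-- Surjectivity of the norm `v ↦ v ^ (q + 1)` onto the subfield with `q` elements. -/
lemma exists_pow_succ_eq {q : ℕ} (hq : 1 < q) (hF : Fintype.card F = q ^ 2) (s : F)
    (hs : s ^ q = s) : ∃ v : F, v ^ (q + 1) = s := by
  classical
  by_cases h0 : s = 0
  · exact ⟨0, by simp [h0]⟩
  obtain ⟨g, hg⟩ := IsCyclic.exists_generator (α := Fˣ)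
  have hord : orderOf g = (q - 1) * (q + 1) := by
    rw [orderOf_eq_card_of_forall_mem_zpowers hg, Nat.card_eq_fintype_card, Fintype.card_units, hF,
      mul_comm, ← Nat.sq_sub_sq, one_pow]
  obtain ⟨m, hm⟩ := (mem_powers_iff_mem_zpowers.2 (hg (Units.mk0 s h0)) : _)
  have hs1 : (Units.mk0 s h0) ^ (q - 1) = 1 := by
    ext
    have : s ^ (q - 1) * s = 1 * s := by rw [← pow_succ, Nat.sub_add_cancel hq.le, hs, one_mul]
    simpa using mul_right_cancel₀ h0 this
  simp only at hm
  rw [← hm, ← pow_mul] at hs1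
  have hdvd := orderOf_dvd_of_pow_eq_one hs1
  rw [hord, mul_comm m] at hdvd
  obtain ⟨c, rfl⟩ := Nat.dvd_of_mul_dvd_mul_left (by omega) hdvd
  refine ⟨(g ^ c : Fˣ), ?_⟩
  rw [← Units.val_pow_eq_pow_val, ← pow_mul, mul_comm c, hm]
  rfl

/-- The field with `q²` elements contains the `n`-th roots of unity, and the subfield with `q`
elements contains `(q - 1) / n₂` nonzero `n`-th powers of the large field, `n₂ = n / gcd n (q + 1)`:
if `g` generates the unit group and `M = (q + 1) / gcd n (q + 1)`, they are the powers of
`(g ^ M) ^ n = g ^ ((q + 1) * n₂)`. -/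
lemma exists_power_set [DecidableEq F] {q n T : ℕ} (hq : 1 < q) (hn : 0 < n)
    (hF : Fintype.card F = q ^ 2) (hdvd : n ∣ q ^ 2 - 1)
    (hT : T ≤ (q - 1) / (n / Nat.gcd n (q + 1))) :
    (∃ ζ : F, IsPrimitiveRoot ζ n) ∧ ∃ S : Finset F, S.card = T ∧
      (∀ s ∈ S, s ≠ 0) ∧ (∀ s ∈ S, s ^ q = s) ∧ ∀ s ∈ S, ∃ b, b ^ n = s := by
  obtain ⟨g, hg⟩ := IsCyclic.exists_generator (α := Fˣ)
  have hord : orderOf g = q ^ 2 - 1 := by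
    rw [orderOf_eq_card_of_forall_mem_zpowers hg, Nat.card_eq_fintype_card, Fintype.card_units, hF]
  have hfac : q ^ 2 - 1 = (q + 1) * (q - 1) := by rw [← Nat.sq_sub_sq, one_pow]
  have hpos : 0 < q ^ 2 - 1 := by
    rw [hfac]; exact Nat.mul_pos (by omega) (by omega)
  refine ⟨?_, ?_⟩
  · obtain ⟨m, hm⟩ := hdvd
    have h := (IsPrimitiveRoot.orderOf g).pow (by omega) (a := m) (b := n)
      (by rw [hord, hm, mul_comm])
    exact ⟨_, IsPrimitiveRoot.coe_units_iff.2 h⟩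
  · set d := Nat.gcd n (q + 1) with hd
    have hdpos : 0 < d := Nat.gcd_pos_of_pos_left _ hn
    obtain ⟨n₂, hn₂⟩ : d ∣ n := Nat.gcd_dvd_left _ _
    obtain ⟨M, hM⟩ : d ∣ q + 1 := Nat.gcd_dvd_right _ _
    have hn₂' : n / d = n₂ := by rw [hn₂, Nat.mul_div_cancel_left _ hdpos]
    rw [hn₂'] at hT
    have hn₂pos : 0 < n₂ := Nat.pos_of_ne_zero (by rintro rfl; simp at hn₂; omega)
    have hcop : Nat.Coprime n₂ M := by
      have h := Nat.coprime_div_gcd_div_gcd (m := n) (n := q + 1) hdpos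
      rwa [← hd, hn₂', hM, Nat.mul_div_cancel_left _ hdpos] at h
    have hn₂dvd : n₂ ∣ q - 1 := by
      apply hcop.dvd_of_dvd_mul_left
      rw [hfac, hM, hn₂, mul_assoc] at hdvd
      exact Nat.dvd_of_mul_dvd_mul_left hdpos hdvd
    obtain ⟨r, hr⟩ := hn₂dvd
    have hexp : M * n = (q + 1) * n₂ := by rw [hM, hn₂]; ring
    have hh : IsPrimitiveRoot (g ^ (M * n)) r := by
      apply (IsPrimitiveRoot.orderOf g).pow (by omega)
      rw [hord, hfac, hexp, hr]; ring
    rw [hr, Nat.mul_div_cancel_left _ hn₂pos] at hT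
    refine ⟨(Finset.range T).image fun j => (((g ^ (M * n)) ^ j : Fˣ) : F), ?_, ?_, ?_, ?_⟩
    · rw [Finset.card_image_of_injOn, Finset.card_range]
      intro i hi j hj hij
      simp only [Finset.coe_range, Set.mem_Iio] at hi hj
      exact hh.pow_inj (by omega) (by omega) (Units.ext hij)
    · simp only [Finset.mem_image]
      rintro _ ⟨j, _, rfl⟩
      exact Units.ne_zero _
    · simp only [Finset.mem_image]
      rintro _ ⟨j, _, rfl⟩
      have h1 : (g ^ (M * n)) ^ (q - 1) = 1 := by
        rw [hr, mul_comm n₂, pow_mul, hh.pow_eq_one, one_pow]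
      have h2 : (g ^ (M * n)) ^ q = g ^ (M * n) := by
        conv_lhs => rw [← Nat.sub_add_cancel hq.le]
        rw [pow_succ, h1, one_mul]
      rw [← Units.val_pow_eq_pow_val, ← pow_mul, mul_comm j, pow_mul, h2]
    · simp only [Finset.mem_image]
      rintro _ ⟨j, _, rfl⟩
      refine ⟨((g ^ (M * j) : Fˣ) : F), ?_⟩
      rw [← Units.val_pow_eq_pow_val, ← pow_mul, ← pow_mul]
      congr 2
      ring

end FiniteField

/-- MDS quantum theorem (classical form) for lengths `N = (t+1)n+1` with `n ∣ q²−1`,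
`n₂ = n/gcd(n,q+1)`, `1 ≤ t ≤ (q−1)/n₂ − 1`, `1 ≤ k ≤ ⌊(N+q−1)/(q+1)⌋`:
(a) an MDS Hermitian self-orthogonal `[N,k]` code with dual distance `k+1` exists;
(b) if `k(q+1) = N−1`, an MDS Hermitian self-orthogonal `[N+1,k+1]` code with dual
distance `k+2` exists; (c) if `N−1+q ≠ k(q+1) ≠ N−1`, such a code of length
`n' ∈ {N, N+1}` exists. -/
theorem stmt14 (q n : ℕ) (hq : IsPrimePow q) (hn : 0 < n)
    (hdvd : n ∣ q ^ 2 - 1)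
    (t : ℕ) (ht1 : 1 ≤ t) (ht2 : t ≤ (q - 1) / (n / Nat.gcd n (q + 1)) - 1)
    (N : ℕ) (hN : N = (t + 1) * n + 1)
    (k : ℕ) (hk1 : 1 ≤ k) (hk2 : k ≤ (N + q - 1) / (q + 1))
    (F : Type*) [Field F] [Fintype F] (hF : Fintype.card F = q ^ 2) :
    (∃ C : Submodule F (Fin N → F),
      Module.finrank F C = k ∧ IsHermSelfOrth q C ∧
      MinDistEq C (N - k + 1) ∧ MinDistEq (hermDual q C) (k + 1)) ∧
    (k * (q + 1) = N - 1 →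
      ∃ C : Submodule F (Fin (N + 1) → F),
        Module.finrank F C = k + 1 ∧ IsHermSelfOrth q C ∧
        MinDistEq C ((N + 1) - (k + 1) + 1) ∧
        MinDistEq (hermDual q C) (k + 2)) ∧
    (N - 1 + q ≠ k * (q + 1) → k * (q + 1) ≠ N - 1 →
      ∃ n' : ℕ, (n' = N ∨ n' = N + 1) ∧
        ∃ C : Submodule F (Fin n' → F),
          Module.finrank F C = k + 1 ∧ IsHermSelfOrth q C ∧
          MinDistEq C (n' - (k + 1) + 1) ∧
          MinDistEq (hermDual q C) (k + 2)) := by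
  classical
  have hq1 : 1 < q := hq.one_lt
  have hq0 : 0 < q := by omega
  obtain ⟨σ, hσ⟩ : ∃ σ : F →+* F, ∀ x, σ x = x ^ q := by
    obtain ⟨p, m, hp, hm, rfl⟩ := (isPrimePow_nat_iff q).1 hq
    obtain ⟨p', hp'⟩ := CharP.exists F
    have hp'' : p'.Prime := CharP.char_is_prime F p'
    have : p' = p := by
      have h1 : ((p ^ m) ^ 2 : ℕ) = (0 : F) := by rw [← hF, Nat.cast_card_eq_zero]
      rw [CharP.cast_eq_zero_iff F p'] at h1
      exact (Nat.prime_dvd_prime_iff_eq hp'' hp).1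
        (hp''.dvd_of_dvd_pow (hp''.dvd_of_dvd_pow h1))
    subst this
    have := Fact.mk hp
    exact ⟨iterateFrobenius F p' m, fun x => iterateFrobenius_def p' m x⟩
  have hnorm : ∀ s : F, s ^ q = s → ∃ v, v ^ (q + 1) = s := exists_pow_succ_eq hq1 hF
  obtain ⟨⟨ζ, hζ⟩, S, hSc, hS0, hSq, hSn⟩ :=
    exists_power_set (F := F) (T := t + 1) hq1 hn hF hdvd (by omega)
  obtain ⟨A, hAc, hAw⟩ := exists_points hn σ hσ hζ S hS0 hSq hSn
  rw [hSc, ← hN] at hAc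
  let a : Fin N → F := fun l => (A.equivFinOfCardEq hAc).symm l
  have ha : Function.Injective a :=
    Subtype.val_injective.comp (A.equivFinOfCardEq hAc).symm.injective
  let u : Fin N → F := fun l => Lagrange.nodalWeight A id (a l)
  have haA : ∀ l, a l ∈ A := fun l => ((A.equivFinOfCardEq hAc).symm l).2
  have hu0 : ∀ l, u l ≠ 0 := fun l => Lagrange.nodalWeight_ne_zero (Set.injOn_id _) (haA l)
  have hu : ∀ l, u l ^ q = u l := fun l => hAw _ (haA l)
  have hsum : ∀ e < N, ∑ l, u l * a l ^ e = if e + 1 = N then 1 else 0 := by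
    intro e he
    have h := sum_nodalWeight_mul_pow A (e := e) (by omega)
    rw [hAc] at h
    rw [← h, ← Finset.sum_coe_sort A]
    exact Equiv.sum_comp (A.equivFinOfCardEq hAc).symm
      (fun x : A => Lagrange.nodalWeight A id (x : F) * (x : F) ^ e)
  have hzero : ∀ e, e + 2 ≤ N → ∑ l, u l * a l ^ e = 0 := by
    intro e he
    rw [hsum e (by omega), if_neg (by omega)]
  -- conjugating a power sum exchanges the two base-`q` digits of its exponent
  have hconj : ∀ i j, (∑ l, u l * a l ^ (i + q * j)) ^ q = ∑ l, u l * a l ^ (j + q * i) := by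
    intro i j
    rw [← hσ, map_sum]
    refine Finset.sum_congr rfl fun l _ => ?_
    have hcard : a l ^ (q ^ 2) = a l := by rw [← hF, FiniteField.pow_card]
    rw [hσ, mul_pow, hu, ← pow_mul]
    have : (i + q * j) * q = q ^ 2 * j + q * i := by ring
    rw [this, pow_add, pow_mul, hcard, pow_add]
  have hN3 : 3 ≤ N := by
    have := Nat.mul_le_mul (show 2 ≤ t + 1 by omega) hn
    omega
  have hk3 : k * (q + 1) ≤ N + q - 1 := (Nat.le_div_iff_mul_le (by omega)).1 hk2
  -- from here on the dimension `k` of the statement is written `k + 1`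
  obtain ⟨k, rfl⟩ : ∃ k', k = k' + 1 := ⟨k - 1, by omega⟩
  have hkq : (k + 1) * (q + 1) = k * q + k + q + 1 := by ring
  have hkk : 2 * k ≤ k * q := by nlinarith
  have grs : ∀ K, 1 ≤ K → K + 1 ≤ N → (K - 1) + q * (K - 1) + 2 ≤ N →
      ∃ C : Submodule F (Fin N → F),
        Module.finrank F C = K ∧ IsHermSelfOrth q C ∧
        MinDistEq C (N - K + 1) ∧ MinDistEq (hermDual q C) (K + 1) := by
    intro K h1 h2 h3
    refine exists_grs hq0 σ hσ hnorm a u ha hu0 hu h1 h2 fun i hi j hj => hzero _ ?_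
    have := Nat.mul_le_mul_left q (show j ≤ K - 1 by omega)
    omega
  have hcomm : q * k = k * q := mul_comm _ _
  have hcomm' : q * (k + 1) = k * q + q := by ring
  refine ⟨?_, ?_, ?_⟩
  · refine grs (k + 1) (by omega) (by omega) ?_
    rw [Nat.add_sub_cancel]
    omega
  · intro hk
    have htop : ∑ l, u l * a l ^ ((k + 1) + q * (k + 1)) = 1 := by
      rw [hsum _ (by omega), if_pos (by omega)]
    refine exists_extended_grs hq0 σ hσ hnorm a u ha hu0 hu (by omega) ?_ ?_ ?_
    · intro i hi j hj hij
      apply hzero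
      have h1 := Nat.mul_le_mul_left q hj
      rcases Nat.lt_or_ge j (k + 1) with h | h
      · have h2 := Nat.mul_le_mul_left q (show j ≤ k by omega)
        omega
      · omega
    · rw [htop]; exact one_ne_zero
    · rw [htop, one_pow]
  · intro hne1 hne2
    rcases Nat.lt_or_ge ((k + 1) * (q + 1)) (N - 1) with hlt | hge
    · refine ⟨N, Or.inl rfl, grs (k + 1 + 1) (by omega) (by omega) ?_⟩
      rw [Nat.add_sub_cancel]
      omega
    · have hS' : ∀ i ≤ k + 1, ∀ j ≤ k + 1, ¬ (i = k + 1 ∧ j = k + 1) →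
          ∑ l, u l * a l ^ (i + q * j) = 0 := by
        have key : ∀ i ≤ k + 1, ∀ j ≤ k, ∑ l, u l * a l ^ (i + q * j) = 0 := by
          intro i hi j hj
          -- `(k + 1) + q * k ≤ N - 2` restates the strict inequality
          -- `(k + 1) * (q + 1) < N - 1 + q`
          apply hzero
          have h2 := Nat.mul_le_mul_left q hj
          omega
        intro i hi j hj hij
        rcases Nat.lt_or_ge j (k + 1) with h | h
        · exact key i hi j (by omega)
        · rw [← hconj, key j hj i (by omega), zero_pow hq0.ne']
      by_cases hS0' : ∑ l, u l * a l ^ ((k + 1) + q * (k + 1)) = 0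
      · refine ⟨N, Or.inl rfl, ?_⟩
        refine exists_grs hq0 σ hσ hnorm a u ha hu0 hu (by omega) (by omega) ?_
        intro i hi j hj
        by_cases hij : i = k + 1 ∧ j = k + 1
        · rw [hij.1, hij.2, hS0']
        · exact hS' i (by omega) j (by omega) hij
      · exact ⟨N + 1, Or.inr rfl, exists_extended_grs hq0 σ hσ hnorm a u ha hu0 hu (by omega)
          hS' hS0' (hconj _ _)⟩
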